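/- For every z > 2 and every i ∈ {1, …, n}, E|f_z(W̄⁽ⁱ⁾)| ≤ (1/2)(e^{−1/2} + e^{e − 2}) · e^{−z/2}. -/

import Mathlib

open MeasureTheory ProbabilityTheory Real

/-- The standard normal cumulative distribution function. -/
noncomputable def Phi (z : ℝ) : ℝ :=
  (Real.sqrt (2 * Real.pi))⁻¹ * ∫ u in Set.Iic z, Real.exp (-u ^ 2 / 2)

/-- The bounded solution `f_z` of the Stein equation
`f'(w) - w f(w) = 1{w ≤ z} - Φ(z)`. -/
noncomputable def fz (z w : ℝ) : ℝ :=
  if w ≤ z then Real.sqrt (2 * Real.pi) * Real.exp (w ^ 2 / 2) * Phi w * (1 - Phi z)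
  else Real.sqrt (2 * Real.pi) * Real.exp (w ^ 2 / 2) * Phi z * (1 - Phi w)

/-- The derivative `f_z'`, expressed via the Stein equation. -/
noncomputable def fz' (z w : ℝ) : ℝ :=
  w * fz z w + (if w ≤ z then 1 else 0) - Phi z

/-- The truncation `x̄ᵢ = ξᵢ 1{ξᵢ ≤ 1}`. -/
noncomputable def xbar {Ω : Type*} {n : ℕ} (ξ : Fin n → Ω → ℝ) (i : Fin n) (ω : Ω) : ℝ :=
  if ξ i ω ≤ 1 then ξ i ω else 0

/-- `W̄ = ∑ᵢ x̄ᵢ`. -/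
noncomputable def Wbar {Ω : Type*} {n : ℕ} (ξ : Fin n → Ω → ℝ) (ω : Ω) : ℝ :=
  ∑ i, xbar ξ i ω

/-- `W̄⁽ⁱ⁾ = W̄ - x̄ᵢ`. -/
noncomputable def Wbari {Ω : Type*} {n : ℕ} (ξ : Fin n → Ω → ℝ) (i : Fin n) (ω : Ω) : ℝ :=
  Wbar ξ ω - xbar ξ i ω

/-- `K̄ᵢ(t) = E[x̄ᵢ (1{0 ≤ t ≤ x̄ᵢ} - 1{x̄ᵢ ≤ t < 0})]`. -/
noncomputable def Kbar {Ω : Type*} [MeasureSpace Ω] {n : ℕ} (ξ : Fin n → Ω → ℝ)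
    (i : Fin n) (t : ℝ) : ℝ :=
  ∫ ω, xbar ξ i ω * ((if 0 ≤ t ∧ t ≤ xbar ξ i ω then (1 : ℝ) else 0)
    - (if xbar ξ i ω ≤ t ∧ t < 0 then (1 : ℝ) else 0))

/-- `β₂ = ∑ᵢ E[ξᵢ² 1{|ξᵢ| > 1}]`. -/
noncomputable def beta2 {Ω : Type*} [MeasureSpace Ω] {n : ℕ} (ξ : Fin n → Ω → ℝ) : ℝ :=
  ∑ i, ∫ ω, (if 1 < |ξ i ω| then (ξ i ω) ^ 2 else 0)

/-- `β₃ = ∑ᵢ E[|ξᵢ|³ 1{|ξᵢ| ≤ 1}]`. -/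
noncomputable def beta3 {Ω : Type*} [MeasureSpace Ω] {n : ℕ} (ξ : Fin n → Ω → ℝ) : ℝ :=
  ∑ i, ∫ ω, (if |ξ i ω| ≤ 1 then |ξ i ω| ^ 3 else 0)

noncomputable def GG (w : ℝ) : ℝ := ∫ t in Set.Ici (0:ℝ), Real.exp (w * t - t ^ 2 / 2)

lemma gauss_int : Integrable (fun u : ℝ => Real.exp (-u ^ 2 / 2)) := by
  have := integrable_exp_neg_mul_sq (b := 1/2) (by norm_num)
  refine this.congr (Filter.Eventually.of_forall fun u => ?_)
  simp only
  congr 1; ring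

lemma gauss_total : ∫ u : ℝ, Real.exp (-u ^ 2 / 2) = Real.sqrt (2 * Real.pi) := by
  have := integral_gaussian (1/2)
  rw [show Real.pi / (1/2) = 2 * Real.pi by ring] at this
  rw [← this]
  congr 1; ext u; congr 1; ring

lemma GG_int (w : ℝ) : Integrable (fun t : ℝ => Real.exp (w * t - t ^ 2 / 2)) := by
  have h := (gauss_int.comp_sub_left w).const_mul (Real.exp (w ^ 2 / 2))
  refine h.congr (Filter.Eventually.of_forall fun u => ?_)
  simp only
  rw [← Real.exp_add]; congr 1; ring

lemma GG_eq (w : ℝ) :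
    Real.exp (w ^ 2 / 2) * ∫ u in Set.Iic w, Real.exp (-u ^ 2 / 2) = GG w := by
  rw [GG, ← integral_indicator measurableSet_Iic, ← integral_indicator measurableSet_Ici,
    ← integral_sub_left_eq_self _ _ w, ← integral_const_mul]
  congr 1; ext t
  by_cases ht : 0 ≤ t
  · rw [Set.indicator_of_mem (by simpa using ht), Set.indicator_of_mem (by simpa using ht),
      ← Real.exp_add]
    congr 1; ring
  · rw [Set.indicator_of_notMem (by simpa using ht), Set.indicator_of_notMem (by simpa using ht),
      mul_zero]

lemma GG_nonneg (w : ℝ) : 0 ≤ GG w := integral_nonneg fun _ => (Real.exp_pos _).le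

lemma GG_mono {a b : ℝ} (h : a ≤ b) : GG a ≤ GG b := by
  refine setIntegral_mono_on (GG_int a).integrableOn (GG_int b).integrableOn measurableSet_Ici ?_
  intro t ht
  have ht : 0 ≤ t := ht
  gcongr

lemma s_pos : 0 < Real.sqrt (2 * Real.pi) := by positivity

lemma GG_Phi (w : ℝ) : Real.sqrt (2 * Real.pi) * Real.exp (w ^ 2 / 2) * Phi w = GG w := by
  rw [← GG_eq, Phi]
  have := s_pos
  field_simp

lemma Phi_neg (z : ℝ) : 1 - Phi z = Phi (-z) := by
  have h1 : ∫ u in Set.Iic (-z), Real.exp (-u ^ 2 / 2) = ∫ u in Set.Ioi z, Real.exp (-u ^ 2 / 2) := by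
    have := integral_comp_neg_Iic (-z) (fun u : ℝ => Real.exp (-u ^ 2 / 2))
    simpa using this
  have h2 := intervalIntegral.integral_Iic_add_Ioi (b := z) gauss_int.integrableOn gauss_int.integrableOn
  rw [gauss_total] at h2
  have := s_pos
  unfold Phi
  rw [h1, eq_sub_of_add_eq' h2]
  field_simp

lemma Phi_nonneg (z : ℝ) : 0 ≤ Phi z :=
  mul_nonneg (inv_nonneg.2 s_pos.le) (integral_nonneg fun _ => (Real.exp_pos _).le)

lemma Phi_le_one (z : ℝ) : Phi z ≤ 1 := by
  have := Phi_neg z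
  have := Phi_nonneg (-z)
  linarith

lemma GG_neg_le {z : ℝ} (hz : 2 < z) : GG (-z) ≤ 1 / 2 := by
  have hi : IntegrableOn (fun t : ℝ => Real.exp (-z * t)) (Set.Ioi 0) :=
    integrableOn_exp_mul_Ioi (by linarith) 0
  have h : GG (-z) ≤ ∫ t in Set.Ioi (0:ℝ), Real.exp (-z * t) := by
    rw [GG, integral_Ici_eq_integral_Ioi]
    refine setIntegral_mono_on (GG_int _).integrableOn hi measurableSet_Ioi ?_
    intro t ht
    apply Real.exp_le_exp.2
    nlinarith [sq_nonneg t]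
  rw [integral_exp_mul_Ioi (by linarith)] at h
  refine h.trans ?_
  simp only [mul_zero, Real.exp_zero]
  rw [neg_div_neg_eq]
  exact one_div_le_one_div_of_le (by norm_num) hz.le

lemma fz_nonneg (z w : ℝ) : 0 ≤ fz z w := by
  have h1 := Phi_nonneg z
  have h2 := Phi_nonneg w
  have h3 := Phi_le_one z
  have h4 := Phi_le_one w
  have := s_pos
  unfold fz
  split_ifs
  · exact mul_nonneg (by positivity) (by linarith)
  · exact mul_nonneg (by positivity) (by linarith)

lemma fz_le_half {z : ℝ} (hz : 2 < z) (w : ℝ) : fz z w ≤ 1 / 2 := by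
  have h1 := Phi_nonneg z
  have h3 := Phi_le_one z
  have hh := GG_neg_le hz
  unfold fz
  split_ifs with h
  · rw [GG_Phi]
    have hm := GG_mono h
    have e : GG z * (1 - Phi z) = Phi z * GG (-z) := by
      rw [Phi_neg, ← GG_Phi z, ← GG_Phi (-z), neg_sq]; ring
    calc GG w * (1 - Phi z) ≤ GG z * (1 - Phi z) := mul_le_mul_of_nonneg_right hm (by linarith)
      _ = Phi z * GG (-z) := e
      _ ≤ 1 * (1 / 2) := mul_le_mul h3 hh (GG_nonneg _) (by norm_num)
      _ = 1 / 2 := one_mul _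
  · have hm := GG_mono (show -w ≤ -z by linarith)
    have e : Real.sqrt (2 * Real.pi) * Real.exp (w ^ 2 / 2) * Phi z * (1 - Phi w)
        = Phi z * GG (-w) := by
      rw [Phi_neg w, ← GG_Phi (-w), neg_sq]; ring
    rw [e]
    calc Phi z * GG (-w) ≤ 1 * (1 / 2) :=
          mul_le_mul h3 (hm.trans hh) (GG_nonneg _) (by norm_num)
      _ = 1 / 2 := one_mul _

lemma fz_le_left {z : ℝ} (hz : 2 < z) {w : ℝ} (hw : w ≤ z - 1) :
    fz z w ≤ 1 / 2 * Real.exp (1 / 2 - z) := by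
  have h3 := Phi_le_one z
  have h4 := Phi_le_one (z - 1)
  have hh := GG_neg_le hz
  have hs := s_pos
  unfold fz
  rw [if_pos (by linarith), GG_Phi]
  have hm := GG_mono hw
  have h5 := Phi_nonneg (-z)
  calc GG w * (1 - Phi z) ≤ GG (z - 1) * (1 - Phi z) :=
        mul_le_mul_of_nonneg_right hm (by linarith)
    _ = Real.sqrt (2 * Real.pi) * Real.exp ((z - 1) ^ 2 / 2) * Phi (z - 1) * Phi (-z) := by
        rw [← GG_Phi, Phi_neg]
    _ ≤ Real.sqrt (2 * Real.pi) * Real.exp ((z - 1) ^ 2 / 2) * 1 * Phi (-z) := by gcongr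
    _ = GG (-z) * Real.exp (1 / 2 - z) := by
        rw [← GG_Phi, show (z - 1) ^ 2 / 2 = (-z) ^ 2 / 2 + (1 / 2 - z) by ring, Real.exp_add]
        ring
    _ ≤ 1 / 2 * Real.exp (1 / 2 - z) := by gcongr

lemma fz_pointwise {z : ℝ} (hz : 2 < z) (w : ℝ) :
    |fz z w| ≤ 1 / 2 * Real.exp (1 / 2 - z) + 1 / 2 * Real.exp (1 - z) * Real.exp w := by
  rw [abs_of_nonneg (fz_nonneg z w)]
  by_cases hw : w ≤ z - 1
  · have := fz_le_left hz hw
    have : 0 ≤ 1 / 2 * Real.exp (1 - z) * Real.exp w := by positivity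
    linarith
  · have h1 := fz_le_half hz w
    have h2 : 1 ≤ Real.exp (1 - z + w) := Real.one_le_exp (by linarith)
    rw [Real.exp_add] at h2
    have := Real.exp_pos (1 / 2 - z)
    linarith

lemma exp_quad {x : ℝ} (hx : x ≤ 1) :
    Real.exp x ≤ 1 + x + (Real.exp 1 - 2) * x ^ 2 := by
  rcases le_total x 0 with h | h
  · have h1 := Real.quadratic_le_exp_of_nonneg (x := -x) (by linarith)
    have he : 2.5 ≤ Real.exp 1 := by have := Real.exp_one_gt_d9; norm_num at *; linarith
    have h2 : Real.exp x * Real.exp (-x) = 1 := by rw [← Real.exp_add]; simp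
    have h3 : Real.exp x ≤ 1 + x + x ^ 2 / 2 := by
      have hp := Real.exp_pos x
      have h4 : Real.exp x * (1 + -x + (-x) ^ 2 / 2) ≤ 1 := by
        exact (mul_le_mul_of_nonneg_left h1 hp.le).trans h2.le
      have h5 : 0 < 1 + -x + (-x) ^ 2 / 2 := by nlinarith [sq_nonneg x]
      refine le_of_mul_le_mul_right (h4.trans ?_) h5
      nlinarith [sq_nonneg (x^2)]
    nlinarith [sq_nonneg x]
  · have hs : ∀ y : ℝ, HasSum (fun k : ℕ => y ^ k / (k.factorial : ℝ)) (Real.exp y) := by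
      intro y
      rw [Real.exp_eq_exp_ℝ]
      exact NormedSpace.expSeries_div_hasSum_exp y
    have hs2 : ∀ y : ℝ, HasSum (fun k : ℕ => y ^ (k + 2) / ((k + 2).factorial : ℝ))
        (Real.exp y - (1 + y)) := by
      intro y
      have := (hasSum_nat_add_iff' 2).2 (hs y)
      simpa [Finset.sum_range_succ] using this
    have := hasSum_le (fun k => ?_) (hs2 x) ((hs2 1).mul_left (x ^ 2))
    · linarith
    · rw [one_pow, mul_one_div, pow_add]
      gcongr
      have : x ^ k ≤ 1 := pow_le_one₀ h hx
      nlinarith [sq_nonneg x]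

lemma xbar_le_one {Ω : Type*} {n : ℕ} (ξ : Fin n → Ω → ℝ) (i : Fin n) (ω : Ω) :
    xbar ξ i ω ≤ 1 := by
  unfold xbar; split_ifs with h
  · exact h
  · norm_num

lemma xbar_meas {Ω : Type*} [MeasurableSpace Ω] {n : ℕ} (ξ : Fin n → Ω → ℝ)
    (hmeas : ∀ i, Measurable (ξ i)) (i : Fin n) : Measurable (xbar ξ i) := by
  exact Measurable.ite (measurableSet_le (hmeas i) measurable_const) (hmeas i) measurable_const

lemma mgf_xbar {Ω : Type*} [MeasureSpace Ω] [IsProbabilityMeasure (ℙ : Measure Ω)]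
    {n : ℕ} (ξ : Fin n → Ω → ℝ)
    (hmeas : ∀ i, Measurable (ξ i))
    (hL2 : ∀ i, MemLp (ξ i) 2 ℙ)
    (hmean : ∀ i, ∫ ω, ξ i ω = 0) (j : Fin n) :
    mgf (xbar ξ j) ℙ 1 ≤ Real.exp ((Real.exp 1 - 2) * ∫ ω, (ξ j ω) ^ 2) := by
  have he : 2 ≤ Real.exp 1 := by have := Real.exp_one_gt_d9; norm_num at *; linarith
  have hi1 : Integrable (ξ j) ℙ := (hL2 j).integrable (by norm_num)
  have hi2 : Integrable (fun ω => (ξ j ω) ^ 2) ℙ := (hL2 j).integrable_sq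
  have hI : Integrable (fun ω => 1 + ξ j ω + (Real.exp 1 - 2) * (ξ j ω) ^ 2) ℙ :=
    ((integrable_const _).add hi1).add (hi2.const_mul _)
  calc mgf (xbar ξ j) ℙ 1 ≤ ∫ ω, (1 + ξ j ω + (Real.exp 1 - 2) * (ξ j ω) ^ 2) := by
        unfold mgf
        refine integral_mono_of_nonneg (Filter.Eventually.of_forall fun ω => (Real.exp_pos _).le) hI
          (Filter.Eventually.of_forall fun ω => ?_)
        simp only [one_mul]
        refine (exp_quad (xbar_le_one ξ j ω)).trans ?_
        unfold xbar
        split_ifs with h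
        · exact le_rfl
        · have : 0 ≤ (Real.exp 1 - 2) * (ξ j ω) ^ 2 := mul_nonneg (by linarith) (sq_nonneg _)
          simp only [not_le] at h
          nlinarith
    _ = (Real.exp 1 - 2) * (∫ ω, (ξ j ω) ^ 2) + 1 := by
        rw [integral_add (f := fun ω => 1 + ξ j ω) ((integrable_const _).add hi1) (hi2.const_mul _),
          integral_add (integrable_const _) hi1, integral_const_mul, hmean j]
        simp [add_comm]
    _ ≤ _ := Real.add_one_le_exp _

/-- Bound on E|f_z(Wbar^(i))| for z > 2. -/
theorem expectation_abs_fz_bound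
    {Ω : Type*} [MeasureSpace Ω] [IsProbabilityMeasure (ℙ : Measure Ω)]
    {n : ℕ} (ξ : Fin n → Ω → ℝ)
    (hmeas : ∀ i, Measurable (ξ i))
    (hindep : iIndepFun ξ ℙ)
    (hL2 : ∀ i, MemLp (ξ i) 2 ℙ)
    (hmean : ∀ i, ∫ ω, ξ i ω = 0)
    (hvar : ∑ i, ∫ ω, (ξ i ω) ^ 2 = 1)
    (z : ℝ) (hz : 2 < z) (i : Fin n) :
    (∫ ω, |fz z (Wbari ξ i ω)|)
      ≤ (1 / 2) * (Real.exp (-(1 / 2) : ℝ) + Real.exp (Real.exp 1 - 2))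
          * Real.exp (-z / 2) := by
  have hW : ∀ ω, Wbari ξ i ω = (∑ j ∈ Finset.univ.erase i, xbar ξ j) ω := by
    intro ω
    rw [Wbari, Wbar, Finset.sum_apply, ← Finset.add_sum_erase _ _ (Finset.mem_univ i)]
    ring
  have hWm : Measurable (Wbari ξ i) := by
    have : Wbari ξ i = ∑ j ∈ Finset.univ.erase i, xbar ξ j := funext hW
    rw [this, Finset.sum_fn]
    exact Finset.measurable_sum _ fun j _ => xbar_meas ξ hmeas j
  have hind : iIndepFun (fun j => xbar ξ j) ℙ := by
    have hg : Measurable (fun x : ℝ => if x ≤ 1 then x else 0) :=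
      Measurable.ite measurableSet_Iic measurable_id measurable_const
    exact hindep.comp (fun _ x => if x ≤ 1 then x else 0) (fun _ => hg)
  have he : 2 ≤ Real.exp 1 := by have := Real.exp_one_gt_d9; norm_num at *; linarith
  have hmgf : ∫ ω, Real.exp (Wbari ξ i ω) ≤ Real.exp (Real.exp 1 - 2) := by
    have h1 : ∫ ω, Real.exp (Wbari ξ i ω)
        = mgf (∑ j ∈ Finset.univ.erase i, xbar ξ j) ℙ 1 := by
      unfold mgf
      simp only [hW, one_mul]
    rw [h1, hind.mgf_sum (fun j => xbar_meas ξ hmeas j)]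
    calc ∏ j ∈ Finset.univ.erase i, mgf (xbar ξ j) ℙ 1
        ≤ ∏ j ∈ Finset.univ.erase i, Real.exp ((Real.exp 1 - 2) * ∫ ω, (ξ j ω) ^ 2) :=
          Finset.prod_le_prod (fun _ _ => mgf_nonneg) fun j _ => mgf_xbar ξ hmeas hL2 hmean j
      _ = Real.exp ((Real.exp 1 - 2) * ∑ j ∈ Finset.univ.erase i, ∫ ω, (ξ j ω) ^ 2) := by
          rw [← Real.exp_sum, Finset.mul_sum]
      _ ≤ Real.exp (Real.exp 1 - 2) := by
          apply Real.exp_le_exp.2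
          have : ∑ j ∈ Finset.univ.erase i, ∫ ω, (ξ j ω) ^ 2 ≤ 1 := by
            rw [← hvar]
            exact Finset.sum_le_sum_of_subset_of_nonneg (Finset.erase_subset _ _)
              fun j _ _ => integral_nonneg fun _ => sq_nonneg _
          nlinarith
  have hint : Integrable (fun ω => Real.exp (Wbari ξ i ω)) ℙ := by
    refine Integrable.of_bound (Real.measurable_exp.comp hWm).aestronglyMeasurable
      (Real.exp (∑ j ∈ Finset.univ.erase i, (1:ℝ))) (Filter.Eventually.of_forall fun ω => ?_)
    rw [Real.norm_eq_abs, Real.abs_exp, hW, Finset.sum_apply]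
    exact Real.exp_le_exp.2 (Finset.sum_le_sum fun j _ => xbar_le_one ξ j ω)
  have hmain : (∫ ω, |fz z (Wbari ξ i ω)|)
      ≤ 1 / 2 * Real.exp (1 / 2 - z) + 1 / 2 * Real.exp (1 - z) * ∫ ω, Real.exp (Wbari ξ i ω) := by
    calc (∫ ω, |fz z (Wbari ξ i ω)|) ≤ ∫ ω, (1 / 2 * Real.exp (1 / 2 - z)
          + 1 / 2 * Real.exp (1 - z) * Real.exp (Wbari ξ i ω)) :=
          integral_mono_of_nonneg (Filter.Eventually.of_forall fun ω => abs_nonneg _)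
            ((integrable_const _).add (hint.const_mul _))
            (Filter.Eventually.of_forall fun ω => fz_pointwise hz _)
      _ = _ := by
          rw [integral_add (integrable_const _) (hint.const_mul _), integral_const,
            probReal_univ, one_smul, integral_const_mul]
  have e1 : Real.exp (1 / 2 - z) ≤ Real.exp (-(1 / 2)) * Real.exp (-z / 2) := by
    rw [← Real.exp_add]; apply Real.exp_le_exp.2; linarith
  have e2 : Real.exp (1 - z) ≤ Real.exp (-z / 2) := by
    apply Real.exp_le_exp.2; linarith
  have e3 : Real.exp (1 - z) * ∫ ω, Real.exp (Wbari ξ i ω)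
      ≤ Real.exp (-z / 2) * Real.exp (Real.exp 1 - 2) :=
    mul_le_mul e2 hmgf (integral_nonneg fun _ => (Real.exp_pos _).le) (Real.exp_pos _).le
  linarith
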